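/- Let R be a Cohen-Macaulay ring with dim R = d < ∞ and let X be a resolving subcategory of mod R. The following are equivalent: (1) X is dominant; (2) for every p ∈ Spec R there exists n ≥ 0 such that some n-th syzygy Ω^n(R/p) belongs to X; (3) for every p ∈ Spec R, some d-th syzygy Ω^d(R/p) belongs to X. -/

import Mathlib

universe u

open CategoryTheory

namespace ResolvPaper

variable (R : Type u) [CommRing R]

/-- `IsSES f g` means `0 → A → B → C → 0` is a short exact sequence. -/
def IsSES {R : Type u} [CommRing R] {A B C : Type u} [AddCommGroup A] [Module R A]
    [AddCommGroup B] [Module R B] [AddCommGroup C] [Module R C]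
    (f : A →ₗ[R] B) (g : B →ₗ[R] C) : Prop :=
  Function.Injective f ∧ Function.Surjective g ∧ LinearMap.range f = LinearMap.ker g

/-- A resolving subcategory of `mod R`, viewed as a set of bundled modules
closed under isomorphism, containing the finitely generated projective modules, and closed
under direct summands, extensions and syzygies. -/
structure IsResolving (𝒳 : Set (ModuleCat.{u} R)) : Prop where
  fg : ∀ M ∈ 𝒳, Module.Finite R M
  iso_closed : ∀ M N : ModuleCat.{u} R, Nonempty (M ≃ₗ[R] N) → M ∈ 𝒳 → N ∈ 𝒳
  proj_mem : ∀ M : ModuleCat.{u} R, Module.Finite R M → Module.Projective R M → M ∈ 𝒳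
  summand_closed : ∀ M N : ModuleCat.{u} R, ModuleCat.of R (↥M × ↥N) ∈ 𝒳 → M ∈ 𝒳
  ext_closed : ∀ (A B C : ModuleCat.{u} R) (f : A →ₗ[R] B) (g : B →ₗ[R] C),
    IsSES f g → A ∈ 𝒳 → C ∈ 𝒳 → B ∈ 𝒳
  syzygy_closed : ∀ (K P M : ModuleCat.{u} R) (f : K →ₗ[R] P) (g : P →ₗ[R] M),
    IsSES f g → Module.Finite R K → Module.Finite R P → Module.Projective R P →
    M ∈ 𝒳 → K ∈ 𝒳

/-- The resolving closure: the smallest resolving subcategory containing `S`. -/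
def resClosure (S : Set (ModuleCat.{u} R)) : Set (ModuleCat.{u} R) :=
  ⋂₀ {𝒳 | IsResolving R 𝒳 ∧ S ⊆ 𝒳}

/-- An extension-closed subcategory of `mod R`: closed under isomorphism,
direct summands and extensions. -/
def IsExtClosed (𝒳 : Set (ModuleCat.{u} R)) : Prop :=
  (∀ M N : ModuleCat.{u} R, Nonempty (M ≃ₗ[R] N) → M ∈ 𝒳 → N ∈ 𝒳) ∧
  (∀ M N : ModuleCat.{u} R, ModuleCat.of R (↥M × ↥N) ∈ 𝒳 → M ∈ 𝒳) ∧
  (∀ (A B C : ModuleCat.{u} R) (f : A →ₗ[R] B) (g : B →ₗ[R] C),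
    IsSES f g → A ∈ 𝒳 → C ∈ 𝒳 → B ∈ 𝒳)

/-- The extension closure of a set of modules. -/
def extClosure (S : Set (ModuleCat.{u} R)) : Set (ModuleCat.{u} R) :=
  ⋂₀ {𝒳 | IsExtClosed R 𝒳 ∧ S ⊆ 𝒳}

/-- `add R`: direct summands of finite free modules. -/
def addR : Set (ModuleCat.{u} R) :=
  {M | ∃ (n : ℕ) (N : ModuleCat.{u} R), Nonempty ((↥M × ↥N) ≃ₗ[R] (Fin n → R))}

/-- `pdLE n M` : the projective dimension of `M` is at most `n`. -/
def pdLE : ℕ → ModuleCat.{u} R → Prop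
  | 0, M => Module.Projective R M
  | n+1, M => ∃ (K P : ModuleCat.{u} R) (f : K →ₗ[R] P) (g : P →ₗ[R] M),
      Module.Finite R P ∧ Module.Projective R P ∧ IsSES f g ∧ pdLE n K

/-- The projective dimension, an element of `WithBot ℕ∞`; the zero module
has projective dimension `⊥ = -∞`. -/
noncomputable def pdim (M : ModuleCat.{u} R) : WithBot ℕ∞ :=
  sInf {x : WithBot ℕ∞ | (x = ⊥ ∧ Subsingleton M) ∨ ∃ n : ℕ, x = (n : ℕ∞) ∧ pdLE R n M}

/-- The depth of `M` with respect to the ideal `I`: the supremum of lengths of weakly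
`M`-regular sequences contained in `I`.  The zero module has depth `∞`. -/
noncomputable def depthE (I : Ideal R) (M : Type u) [AddCommGroup M] [Module R M] : ℕ∞ :=
  sSup {x : ℕ∞ | ∃ rs : List R, (∀ r ∈ rs, r ∈ I) ∧
    RingTheory.Sequence.IsWeaklyRegular M rs ∧ x = rs.length}

/-- The grade of an ideal: the length of a maximal `R`-regular sequence in `I`. -/
noncomputable def gradeE (I : Ideal R) : ℕ∞ := depthE R I R

/-- A grade consistent function on `Spec R`. -/
def GradeConsistent (f : PrimeSpectrum R → ℕ) : Prop :=
  (∀ p : PrimeSpectrum R, (f p : ℕ∞) ≤ gradeE R p.asIdeal) ∧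
  (∀ p q : PrimeSpectrum R, p.asIdeal ≤ q.asIdeal → f p ≤ f q)

/-- The localization of a module at a prime, as a module over the local ring `R_p`. -/
noncomputable abbrev localizeM (p : PrimeSpectrum R) (M : ModuleCat.{u} R) :
    ModuleCat.{u} (Localization.AtPrime p.asIdeal) :=
  ModuleCat.of (Localization.AtPrime p.asIdeal) (LocalizedModule p.asIdeal.primeCompl M)

/-- `pd_{R_p} M_p`. -/
noncomputable def localPdim (p : PrimeSpectrum R) (M : ModuleCat.{u} R) : WithBot ℕ∞ :=
  pdim (Localization.AtPrime p.asIdeal) (localizeM R p M)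

/-- `depth_{R_p} M_p`. -/
noncomputable def localDepth (p : PrimeSpectrum R) (M : ModuleCat.{u} R) : ℕ∞ :=
  depthE (Localization.AtPrime p.asIdeal)
    (IsLocalRing.maximalIdeal (Localization.AtPrime p.asIdeal))
    (LocalizedModule p.asIdeal.primeCompl M)

/-- The height of a prime ideal. -/
noncomputable def heightE (p : PrimeSpectrum R) : ℕ∞ := Order.height p

/-- `PD(R)` : finitely generated modules of finite projective dimension. -/
def PDcat : Set (ModuleCat.{u} R) :=
  {M | Module.Finite R M ∧ ∃ n : ℕ, pdLE R n M}

/-- `MCM(R)` : maximal Cohen-Macaulay modules. -/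
def MCMcat : Set (ModuleCat.{u} R) :=
  {M | Module.Finite R M ∧ ∀ p : PrimeSpectrum R, heightE R p ≤ localDepth R p M}

/-- The nonfree locus of a module. -/
def NF (M : ModuleCat.{u} R) : Set (PrimeSpectrum R) :=
  {p | ¬ Module.Free (Localization.AtPrime p.asIdeal) (LocalizedModule p.asIdeal.primeCompl M)}

/-- The infinite projective dimension locus of a module. -/
def IPD (M : ModuleCat.{u} R) : Set (PrimeSpectrum R) :=
  {p | localPdim R p M = (⊤ : WithBot ℕ∞)}

/-- The infinite projective dimension locus of a collection of modules. -/
def IPDcat (𝒳 : Set (ModuleCat.{u} R)) : Set (PrimeSpectrum R) :=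
  ⋃ M ∈ 𝒳, IPD R M

/-- The modules in `mod R` whose infinite projective dimension locus lies in `W`. -/
def IPDinv (W : Set (PrimeSpectrum R)) : Set (ModuleCat.{u} R) :=
  {M | Module.Finite R M ∧ IPD R M ⊆ W}

/-- A specialization closed subset of `Spec R`. -/
def SpecClosed (W : Set (PrimeSpectrum R)) : Prop :=
  ∀ p ∈ W, ∀ q : PrimeSpectrum R, p.asIdeal ≤ q.asIdeal → q ∈ W

/-- Membership in `add 𝒳_p`: direct summands of localizations of finite direct sums
of members of `𝒳`. -/
def memAddLocal (𝒳 : Set (ModuleCat.{u} R)) (p : PrimeSpectrum R)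
    (N : ModuleCat.{u} (Localization.AtPrime p.asIdeal)) : Prop :=
  ∃ (n : ℕ) (X : Fin n → ModuleCat.{u} R), (∀ i, X i ∈ 𝒳) ∧
    ∃ (N' : ModuleCat.{u} (Localization.AtPrime p.asIdeal)),
      Nonempty ((↥N × ↥N') ≃ₗ[Localization.AtPrime p.asIdeal]
        ((i : Fin n) → LocalizedModule p.asIdeal.primeCompl (X i)))

/-- `K` is an `n`-th syzygy of `M` computed from a minimal free resolution over the
local ring `S`. -/
def IsMinSyz (S : Type u) [CommRing S] [IsLocalRing S] :
    ℕ → ModuleCat.{u} S → ModuleCat.{u} S → Prop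
  | 0, M, K => Nonempty (K ≃ₗ[S] M)
  | n+1, M, K => ∃ (F : ModuleCat.{u} S) (g : F →ₗ[S] M) (K' : ModuleCat.{u} S)
      (i : K' →ₗ[S] F),
      Module.Finite S F ∧ Module.Free S F ∧ Function.Surjective g ∧
      (LinearMap.ker g ≤ (IsLocalRing.maximalIdeal S) • (⊤ : Submodule S F)) ∧
      Function.Injective i ∧ LinearMap.range i = LinearMap.ker g ∧
      IsMinSyz S n K' K

/-- `K` is an `n`-th syzygy of `M` in some projective resolution (over any ring). -/
def IsSyz : ℕ → ModuleCat.{u} R → ModuleCat.{u} R → Prop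
  | 0, M, K => Nonempty (K ≃ₗ[R] M)
  | n+1, M, K => ∃ (F : ModuleCat.{u} R) (g : F →ₗ[R] M) (K' : ModuleCat.{u} R)
      (i : K' →ₗ[R] F),
      Module.Finite R F ∧ Module.Projective R F ∧ Function.Surjective g ∧
      Function.Injective i ∧ LinearMap.range i = LinearMap.ker g ∧
      IsSyz n K' K

/-- `T` is (isomorphic to) the Auslander transpose of `M`, computed from a minimal
free presentation over the local ring `S`. -/
def IsTranspose (S : Type u) [CommRing S] [IsLocalRing S] (M T : ModuleCat.{u} S) : Prop :=
  ∃ (F1 F0 : ModuleCat.{u} S) (d : F1 →ₗ[S] F0) (e : F0 →ₗ[S] M),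
    Module.Finite S F0 ∧ Module.Free S F0 ∧ Module.Finite S F1 ∧ Module.Free S F1 ∧
    Function.Surjective e ∧ LinearMap.range d = LinearMap.ker e ∧
    LinearMap.ker e ≤ (IsLocalRing.maximalIdeal S) • (⊤ : Submodule S F0) ∧
    LinearMap.ker d ≤ (IsLocalRing.maximalIdeal S) • (⊤ : Submodule S F1) ∧
    Nonempty (T ≃ₗ[S] ((Module.Dual S F1) ⧸ LinearMap.range d.dualMap))

/-- `T` is (isomorphic to) `Tr Ω^n M` over the local ring `S`. -/
def IsTrOmega (S : Type u) [CommRing S] [IsLocalRing S] (n : ℕ) (M T : ModuleCat.{u} S) :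
    Prop :=
  ∃ K : ModuleCat.{u} S, IsMinSyz S n M K ∧ IsTranspose S K T

/-- Resolving subcategory `𝒳` is dominant on `W ⊆ Spec R`. -/
def DominantOn (𝒳 : Set (ModuleCat.{u} R)) (W : Set (PrimeSpectrum R)) : Prop :=
  ∀ p ∈ W, ∃ (n : ℕ) (K : ModuleCat.{u} (Localization.AtPrime p.asIdeal)),
    IsMinSyz (Localization.AtPrime p.asIdeal) n
      (ModuleCat.of (Localization.AtPrime p.asIdeal)
        (IsLocalRing.ResidueField (Localization.AtPrime p.asIdeal))) K ∧
    memAddLocal R 𝒳 p K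

/-- Dominant resolving subcategory. -/
def Dominant (𝒳 : Set (ModuleCat.{u} R)) : Prop := DominantOn R 𝒳 Set.univ

/-- A (noetherian) local ring is Cohen-Macaulay if its depth equals its Krull dimension. -/
def IsCMLocalRing (S : Type u) [CommRing S] [IsLocalRing S] : Prop :=
  IsNoetherianRing S ∧
    ((depthE S (IsLocalRing.maximalIdeal S) S : WithBot ℕ∞) = ringKrullDim S)

/-- A regular local ring: a noetherian local ring whose maximal ideal is generated by
`dim S` elements. -/
def IsRegLocalRing (S : Type u) [CommRing S] [IsLocalRing S] : Prop :=
  IsNoetherianRing S ∧ ∃ s : Finset S,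
    Ideal.span (s : Set S) = IsLocalRing.maximalIdeal S ∧
    ringKrullDim S = (s.card : WithBot ℕ∞)

/-- The singular locus of `R`. -/
def SingLocus : Set (PrimeSpectrum R) :=
  {p | ¬ IsRegLocalRing (Localization.AtPrime p.asIdeal)}

/-- A hypersurface local ring: the completion is a quotient of a regular local ring by
one element. -/
def IsHypersurfaceLocalRing (S : Type u) [CommRing S] [IsLocalRing S] : Prop :=
  ∃ (T : Type u) (_ : CommRing T) (_ : IsLocalRing T) (f : T),
    IsRegLocalRing T ∧
    Nonempty ((AdicCompletion (IsLocalRing.maximalIdeal S) S) ≃+* (T ⧸ Ideal.span {f}))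

/-- A complete intersection local ring: the completion is a quotient of a regular local
ring by a regular sequence. -/
def IsCompleteIntersectionLocalRing (S : Type u) [CommRing S] [IsLocalRing S] : Prop :=
  ∃ (T : Type u) (_ : CommRing T) (_ : IsLocalRing T) (rs : List T),
    IsRegLocalRing T ∧ RingTheory.Sequence.IsRegular T rs ∧
    Nonempty ((AdicCompletion (IsLocalRing.maximalIdeal S) S) ≃+*
      (T ⧸ Ideal.ofList rs))

/-- The subquotient `A / (A ⊓ B)` of two submodules, used for homology. -/
def subquot {S M : Type u} [CommRing S] [AddCommGroup M] [Module S M]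
    (A B : Submodule S M) : Type u :=
  A ⧸ (B.comap A.subtype)

noncomputable instance {S M : Type u} [CommRing S] [AddCommGroup M] [Module S M]
    (A B : Submodule S M) : AddCommGroup (subquot A B) :=
  inferInstanceAs (AddCommGroup (A ⧸ (B.comap A.subtype)))

noncomputable instance {S M : Type u} [CommRing S] [AddCommGroup M] [Module S M]
    (A B : Submodule S M) : Module S (subquot A B) :=
  inferInstanceAs (Module S (A ⧸ (B.comap A.subtype)))

/-- `E` is (isomorphic to) `Ext^{j+1}_S(M, S)`, computed from a finite free resolution. -/
def IsExtPos (S : Type u) [CommRing S] (j : ℕ) (M E : ModuleCat.{u} S) : Prop :=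
  ∃ (F : ℕ → ModuleCat.{u} S) (d : ∀ i : ℕ, (F (i+1) : Type u) →ₗ[S] F i)
    (e : (F 0 : Type u) →ₗ[S] M),
    (∀ i, Module.Finite S (F i)) ∧ (∀ i, Module.Free S (F i)) ∧
    Function.Surjective e ∧ LinearMap.range (d 0) = LinearMap.ker e ∧
    (∀ i, LinearMap.range (d (i+1)) = LinearMap.ker (d i)) ∧
    Nonempty (E ≃ₗ[S]
      subquot (LinearMap.ker ((d (j+1)).dualMap)) (LinearMap.range ((d j).dualMap)))

/-- `T` is (isomorphic to) `Tor_n^S(M, N)`, computed from a projective resolution of `M`. -/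
def IsTor (S : Type u) [CommRing S] (n : ℕ) (M N T : ModuleCat.{u} S) : Prop :=
  ∃ (F : ℕ → ModuleCat.{u} S) (d : ∀ i : ℕ, (F (i+1) : Type u) →ₗ[S] F i)
    (e : (F 0 : Type u) →ₗ[S] M),
    (∀ i, Module.Projective S (F i)) ∧
    Function.Surjective e ∧ LinearMap.range (d 0) = LinearMap.ker e ∧
    (∀ i, LinearMap.range (d (i+1)) = LinearMap.ker (d i)) ∧
    (match n with
      | 0 => Nonempty (T ≃ₗ[S] TensorProduct S M N)
      | (j+1) => Nonempty (T ≃ₗ[S]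
          subquot (LinearMap.ker (LinearMap.rTensor (↥N) (d j)))
            (LinearMap.range (LinearMap.rTensor (↥N) (d (j+1))))))

/-- `idLE n M` : the injective dimension of `M` is at most `n`. -/
def idLE (S : Type u) [CommRing S] : ℕ → ModuleCat.{u} S → Prop
  | 0, M => Module.Injective S M
  | n+1, M => ∃ (I C : ModuleCat.{u} S) (f : M →ₗ[S] I) (g : I →ₗ[S] C),
      IsSES f g ∧ Module.Injective S I ∧ idLE S n C

/-- `PD_0^n(R)` over a local ring: modules of projective dimension at most `n` that are
free on the punctured spectrum. -/
def PD0n [IsLocalRing R] (n : ℕ) : Set (ModuleCat.{u} R) :=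
  {M | Module.Finite R M ∧ pdLE R n M ∧
    ∀ p : PrimeSpectrum R, p.asIdeal ≠ IsLocalRing.maximalIdeal R →
      Module.Free (Localization.AtPrime p.asIdeal) (LocalizedModule p.asIdeal.primeCompl M)}

/-- `PD_0(R)` over a local ring: modules of finite projective dimension that are
free on the punctured spectrum. -/
def PD0 [IsLocalRing R] : Set (ModuleCat.{u} R) :=
  {M | Module.Finite R M ∧ (∃ n : ℕ, pdLE R n M) ∧
    ∀ p : PrimeSpectrum R, p.asIdeal ≠ IsLocalRing.maximalIdeal R →
      Module.Free (Localization.AtPrime p.asIdeal) (LocalizedModule p.asIdeal.primeCompl M)}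

/-- The residue field of a local ring, as a bundled module. -/
noncomputable abbrev residueMod (S : Type u) [CommRing S] [IsLocalRing S] : ModuleCat.{u} S :=
  ModuleCat.of S (IsLocalRing.ResidueField S)

/-!
Let `𝒳` be resolving. The modules with some syzygy in `𝒳` again form a resolving subcategory
`𝒮`, and `𝒳` is closed under kernels of surjections onto modules with a first syzygy in `𝒳`.

If `𝒳` is dominant, then for each prime `p` multiplication by some `s ∉ p` on a syzygy `A` of
`R ⧸ p` factors through a module of `𝒳`, so `A` is in `𝒮` as soon as the homotopy fibre of `s` on
`A` is; the latter is modelled by the fibre product of `s` with a projective cover. Up to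
projectives this fibre on `A` is a syzygy of the fibre on `R ⧸ p`, where `s` is regular, and there
it is a syzygy of `R ⧸ (p + (s))`, whose prime filtration only involves primes strictly above `p`.
Noetherian induction puts every `R ⧸ p` in `𝒮`.

In the Cohen-Macaulay case a prime `p` of height `h ≤ d` contains a regular sequence `rs` of
length `h`, so `R ⧸ (rs)` has a `d`-th syzygy in `𝒳`. A prime `q` over `(rs)` either has larger
height, where induction applies, or is associated to `R ⧸ (rs)`; in the latter case embedding
`R ⧸ q` in `R ⧸ (rs)` and filtering the cokernel lowers the order of the required syzygy by one
until it reaches `d`.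
-/

section ShortExact

variable {R} {A B C K L M N P Q : Type u}
  [AddCommGroup A] [Module R A] [AddCommGroup B] [Module R B] [AddCommGroup C] [Module R C]
  [AddCommGroup K] [Module R K] [AddCommGroup L] [Module R L] [AddCommGroup M] [Module R M]
  [AddCommGroup N] [Module R N] [AddCommGroup P] [Module R P] [AddCommGroup Q] [Module R Q]

lemma isSES_iff_exact {f : A →ₗ[R] B} {g : B →ₗ[R] C} :
    IsSES f g ↔ Function.Injective f ∧ Function.Surjective g ∧ Function.Exact f g := by
  rw [IsSES, LinearMap.exact_iff, eq_comm (a := LinearMap.ker g)]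

lemma isSES_ker_subtype {g : B →ₗ[R] C} (hg : Function.Surjective g) :
    IsSES (LinearMap.ker g).subtype g :=
  ⟨Subtype.val_injective, hg, Submodule.range_subtype _⟩

/-- The fibre product `M ×_N P` of `f : M → N` and `g : P → N`, as a submodule of `M × P`; it is
the pullback from which all auxiliary short exact sequences below are made. -/
def fiberProd (f : M →ₗ[R] N) (g : P →ₗ[R] N) : Submodule R (M × P) :=
  LinearMap.eqLocus (f ∘ₗ LinearMap.fst R M P) (g ∘ₗ LinearMap.snd R M P)

lemma mem_fiberProd {f : M →ₗ[R] N} {g : P →ₗ[R] N} {x : M × P} :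
    x ∈ fiberProd f g ↔ f x.1 = g x.2 :=
  Iff.rfl

namespace IsSES

lemma exact {f : A →ₗ[R] B} {g : B →ₗ[R] C} (h : IsSES f g) : Function.Exact f g :=
  (isSES_iff_exact.mp h).2.2

lemma comp_equiv {f : A →ₗ[R] B} {g : B →ₗ[R] C} (h : IsSES f g) (e : C ≃ₗ[R] M) :
    IsSES f (e.toLinearMap ∘ₗ g) :=
  ⟨h.1, e.surjective.comp h.2.1, by rw [LinearEquiv.ker_comp, h.2.2]⟩

lemma prodMap {f : A →ₗ[R] B} {g : B →ₗ[R] C} {f' : K →ₗ[R] P} {g' : P →ₗ[R] M}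
    (h : IsSES f g) (h' : IsSES f' g') : IsSES (f.prodMap f') (g.prodMap g') :=
  ⟨h.1.prodMap h'.1, h.2.1.prodMap h'.2.1, by
    rw [LinearMap.range_prodMap, LinearMap.ker_prodMap, h.2.2, h'.2.2]⟩

lemma prodMap_id {f : A →ₗ[R] B} {g : B →ₗ[R] C} (h : IsSES f g) (P : Type u)
    [AddCommGroup P] [Module R P] :
    IsSES (LinearMap.inl R B P ∘ₗ f) (g.prodMap (LinearMap.id : P →ₗ[R] P)) :=
  ⟨LinearMap.inl_injective.comp h.1, h.2.1.prodMap Function.surjective_id, by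
    rw [LinearMap.range_comp, h.2.2, LinearMap.ker_prodMap, LinearMap.ker_id, Submodule.map_inl]⟩

lemma exists_fiberProd_fst {i : K →ₗ[R] P} {q : P →ₗ[R] C} (h : IsSES i q) (g : B →ₗ[R] C) :
    ∃ j : K →ₗ[R] fiberProd g q,
      IsSES j (LinearMap.fst R B P ∘ₗ (fiberProd g q).subtype) := by
  refine ⟨(LinearMap.inr R B P ∘ₗ i).codRestrict _ fun k => ?_, isSES_iff_exact.mpr ⟨?_, ?_, ?_⟩⟩
  · simp [mem_fiberProd, h.exact.apply_apply_eq_zero]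
  · exact fun k k' hk => h.1 congr(($hk).1.2)
  · intro b
    obtain ⟨x, hx⟩ := h.2.1 (g b)
    exact ⟨⟨(b, x), hx.symm⟩, rfl⟩
  · rintro ⟨⟨b, x⟩, hbx⟩
    constructor
    · rintro rfl
      obtain ⟨k, rfl⟩ := (h.exact x).mp (by simpa using (mem_fiberProd.mp hbx).symm)
      exact ⟨k, rfl⟩
    · rintro ⟨k, hk⟩
      exact congr(($hk).1.1).symm

lemma exists_fiberProd_snd {f : A →ₗ[R] B} {g : B →ₗ[R] C} (h : IsSES f g) (q : P →ₗ[R] C) :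
    ∃ j : A →ₗ[R] fiberProd g q,
      IsSES j (LinearMap.snd R B P ∘ₗ (fiberProd g q).subtype) := by
  refine ⟨(LinearMap.inl R B P ∘ₗ f).codRestrict _ fun a => ?_, isSES_iff_exact.mpr ⟨?_, ?_, ?_⟩⟩
  · simp [mem_fiberProd, h.exact.apply_apply_eq_zero]
  · exact fun a a' ha => h.1 congr(($ha).1.1)
  · intro x
    obtain ⟨b, hb⟩ := h.2.1 (q x)
    exact ⟨⟨(b, x), hb⟩, rfl⟩
  · rintro ⟨⟨b, x⟩, hbx⟩
    constructor
    · rintro rfl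
      obtain ⟨a, rfl⟩ := (h.exact b).mp (by simpa using mem_fiberProd.mp hbx)
      exact ⟨a, rfl⟩
    · rintro ⟨a, ha⟩
      exact congr(($ha).1.2).symm

lemma fiberProd_snd_comp {f : A →ₗ[R] B} {g : B →ₗ[R] C} (h : IsSES f g) {q : P →ₗ[R] B}
    (hq : Function.Surjective q) :
    IsSES (LinearMap.snd R A P ∘ₗ (fiberProd f q).subtype) (g ∘ₗ q) := by
  refine isSES_iff_exact.mpr ⟨?_, h.2.1.comp hq, fun x => ⟨fun hx => ?_, ?_⟩⟩
  · rintro ⟨⟨a, x⟩, hax⟩ ⟨⟨a', x'⟩, hax'⟩ (rfl : x = x')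
    obtain rfl : a = a' := h.1 ((mem_fiberProd.mp hax).trans (mem_fiberProd.mp hax').symm)
    rfl
  · obtain ⟨a, ha⟩ := (h.exact (q x)).mp hx
    exact ⟨⟨(a, x), ha⟩, rfl⟩
  · rintro ⟨⟨⟨a, x⟩, hax⟩, rfl⟩
    exact (congrArg g (mem_fiberProd.mp hax).symm).trans (h.exact.apply_apply_eq_zero a)

lemma nonempty_equiv_prod {f : A →ₗ[R] B} {g : B →ₗ[R] C} (h : IsSES f g)
    [Module.Projective R C] : Nonempty (B ≃ₗ[R] A × C) := by
  obtain ⟨s, hs⟩ := Module.projective_lifting_property g LinearMap.id h.2.1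
  exact ⟨(h.exact.splitSurjectiveEquiv h.1 ⟨s, hs⟩).1⟩

theorem schanuel {i : K →ₗ[R] P} {p : P →ₗ[R] M} {j : L →ₗ[R] Q} {q : Q →ₗ[R] M}
    (hp : IsSES i p) (hq : IsSES j q) [Module.Projective R P] [Module.Projective R Q] :
    Nonempty ((K × Q) ≃ₗ[R] (L × P)) := by
  obtain ⟨_, hfst⟩ := hq.exists_fiberProd_fst p
  obtain ⟨_, hsnd⟩ := hp.exists_fiberProd_snd q
  obtain ⟨e⟩ := hfst.nonempty_equiv_prod
  obtain ⟨e'⟩ := hsnd.nonempty_equiv_prod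
  exact ⟨e'.symm.trans e⟩

end IsSES

end ShortExact

section Resolving

variable {R}

/-- The modules having some first syzygy in `𝒳`. Iterating it `n` times describes the modules
having some `n`-th syzygy in `𝒳`. -/
def syzPreimage (𝒳 : Set (ModuleCat.{u} R)) : Set (ModuleCat.{u} R) :=
  {M | ∃ (K P : ModuleCat.{u} R) (i : K →ₗ[R] P) (p : P →ₗ[R] M),
    IsSES i p ∧ Module.Finite R P ∧ Module.Projective R P ∧ K ∈ 𝒳}

/-- The modules having some syzygy, of any order, in `𝒳`. -/
def syzSaturation (𝒳 : Set (ModuleCat.{u} R)) : Set (ModuleCat.{u} R) :=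
  ⋃ n, syzPreimage^[n] 𝒳

variable {𝒳 : Set (ModuleCat.{u} R)} {A B C L M : Type u}
  [AddCommGroup A] [Module R A] [AddCommGroup B] [Module R B] [AddCommGroup C] [Module R C]
  [AddCommGroup L] [Module R L] [AddCommGroup M] [Module R M]

namespace IsResolving

lemma mem_of_projective (h𝒳 : IsResolving R 𝒳) (A : Type u) [AddCommGroup A] [Module R A]
    [Module.Finite R A] [Module.Projective R A] : ModuleCat.of R A ∈ 𝒳 :=
  h𝒳.proj_mem (ModuleCat.of R A) ‹_› ‹_›

lemma mem_of_equiv (h𝒳 : IsResolving R 𝒳) (e : A ≃ₗ[R] B) (hA : ModuleCat.of R A ∈ 𝒳) :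
    ModuleCat.of R B ∈ 𝒳 :=
  h𝒳.iso_closed _ _ ⟨e⟩ hA

lemma mem_of_prod_mem (h𝒳 : IsResolving R 𝒳) (h : ModuleCat.of R (A × B) ∈ 𝒳) :
    ModuleCat.of R A ∈ 𝒳 :=
  h𝒳.summand_closed (ModuleCat.of R A) (ModuleCat.of R B) h

lemma mem_of_isSES (h𝒳 : IsResolving R 𝒳) {f : A →ₗ[R] B} {g : B →ₗ[R] C} (h : IsSES f g)
    (hA : ModuleCat.of R A ∈ 𝒳) (hC : ModuleCat.of R C ∈ 𝒳) : ModuleCat.of R B ∈ 𝒳 :=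
  h𝒳.ext_closed (ModuleCat.of R A) (ModuleCat.of R B) (ModuleCat.of R C) f g h hA hC

lemma prod_mem (h𝒳 : IsResolving R 𝒳) (hA : ModuleCat.of R A ∈ 𝒳)
    (hB : ModuleCat.of R B ∈ 𝒳) : ModuleCat.of R (A × B) ∈ 𝒳 :=
  h𝒳.mem_of_isSES (isSES_iff_exact.mpr
    ⟨LinearMap.inl_injective, LinearMap.snd_surjective, Function.Exact.inl_snd⟩) hA hB

lemma pi_mem (h𝒳 : IsResolving R 𝒳) {n : ℕ} {X : Fin n → ModuleCat.{u} R}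
    (hX : ∀ i, X i ∈ 𝒳) : ModuleCat.of R (∀ i, X i) ∈ 𝒳 := by
  induction n with
  | zero => exact h𝒳.mem_of_projective _
  | succ n ih =>
    exact h𝒳.mem_of_equiv (Fin.consLinearEquiv R fun i => X i)
      (h𝒳.prod_mem (hX 0) (ih fun i => hX i.succ))

lemma ker_mem (h𝒳 : IsResolving R 𝒳) {f : A →ₗ[R] B} {g : B →ₗ[R] C} (h : IsSES f g)
    (hB : ModuleCat.of R B ∈ 𝒳) (hC : ModuleCat.of R C ∈ syzPreimage 𝒳) :
    ModuleCat.of R A ∈ 𝒳 := by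
  obtain ⟨K, P, i, p, hp, _, _, hK⟩ := hC
  obtain ⟨_, hfst⟩ := hp.exists_fiberProd_fst g
  obtain ⟨_, hsnd⟩ := h.exists_fiberProd_snd p
  obtain ⟨e⟩ := hsnd.nonempty_equiv_prod
  exact h𝒳.mem_of_prod_mem (h𝒳.mem_of_equiv e (h𝒳.mem_of_isSES hfst hK hB))

lemma cokernel_mem_syzPreimage (h𝒳 : IsResolving R 𝒳) {f : A →ₗ[R] B} {g : B →ₗ[R] C}
    (h : IsSES f g) (hA : ModuleCat.of R A ∈ 𝒳) (hB : ModuleCat.of R B ∈ syzPreimage 𝒳) :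
    ModuleCat.of R C ∈ syzPreimage 𝒳 := by
  obtain ⟨K, P, i, p, hp, hfin, hproj, hK⟩ := hB
  obtain ⟨_, hfst⟩ := hp.exists_fiberProd_fst f
  exact ⟨ModuleCat.of R (fiberProd f p), P, _, _, h.fiberProd_snd_comp hp.2.1, hfin, hproj,
    h𝒳.mem_of_isSES hfst hK hA⟩

lemma subset_syzPreimage [IsNoetherianRing R] (h𝒳 : IsResolving R 𝒳) :
    𝒳 ⊆ syzPreimage 𝒳 := by
  intro M hM
  have := h𝒳.fg M hM
  obtain ⟨n, g, hg⟩ := Module.Finite.exists_fin' R M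
  have hker := isSES_ker_subtype hg
  exact ⟨_, ModuleCat.of R (Fin n → R), _, _, hker, inferInstance, inferInstance,
    h𝒳.syzygy_closed (ModuleCat.of R (LinearMap.ker g)) (ModuleCat.of R (Fin n → R)) M _ _ hker
      inferInstance inferInstance inferInstance hM⟩

lemma syzPreimage_prod_mem (h𝒳 : IsResolving R 𝒳) (hA : ModuleCat.of R A ∈ syzPreimage 𝒳)
    (hB : ModuleCat.of R B ∈ syzPreimage 𝒳) : ModuleCat.of R (A × B) ∈ syzPreimage 𝒳 := by
  obtain ⟨K, P, i, p, hp, _, _, hK⟩ := hA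
  obtain ⟨L, Q, j, q, hq, _, _, hL⟩ := hB
  exact ⟨ModuleCat.of R (K × L), ModuleCat.of R (P × Q), _, _, hp.prodMap hq,
    inferInstanceAs (Module.Finite R (P × Q)), inferInstanceAs (Module.Projective R (P × Q)),
    h𝒳.prod_mem hK hL⟩

lemma syzPreimage_mem_of_prod_mem (h𝒳 : IsResolving R 𝒳)
    (h : ModuleCat.of R (A × B) ∈ syzPreimage 𝒳) [Module.Finite R A] [Module.Finite R B] :
    ModuleCat.of R A ∈ syzPreimage 𝒳 := by
  obtain ⟨m, p, hp⟩ := Module.Finite.exists_fin' R A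
  obtain ⟨n, q, hq⟩ := Module.Finite.exists_fin' R B
  have hker := isSES_ker_subtype hp
  have hprod : ModuleCat.of R (LinearMap.ker p × LinearMap.ker q) ∈ 𝒳 :=
    h𝒳.ker_mem (hker.prodMap (isSES_ker_subtype hq)) (h𝒳.mem_of_projective _) h
  exact ⟨_, ModuleCat.of R (Fin m → R), _, _, hker, inferInstance, inferInstance,
    h𝒳.mem_of_prod_mem hprod⟩

variable [IsNoetherianRing R]

lemma syzPreimage_mem_of_isSES (h𝒳 : IsResolving R 𝒳) {f : A →ₗ[R] B} {g : B →ₗ[R] C}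
    (h : IsSES f g) (hA : ModuleCat.of R A ∈ syzPreimage 𝒳)
    (hC : ModuleCat.of R C ∈ syzPreimage 𝒳) : ModuleCat.of R B ∈ syzPreimage 𝒳 := by
  obtain ⟨K, P, i, p, hp, _, _, hK⟩ := hC
  obtain ⟨_, hfst⟩ := hp.exists_fiberProd_fst g
  obtain ⟨_, hsnd⟩ := h.exists_fiberProd_snd p
  obtain ⟨e⟩ := hsnd.nonempty_equiv_prod
  have hprod := h𝒳.syzPreimage_prod_mem hA (h𝒳.subset_syzPreimage (h𝒳.mem_of_projective P))
  obtain ⟨L, Q, j, q, hq, hfin, hproj, hL⟩ := hprod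
  exact h𝒳.cokernel_mem_syzPreimage hfst hK ⟨L, Q, j, _, hq.comp_equiv e.symm, hfin, hproj, hL⟩

protected theorem syzPreimage (h𝒳 : IsResolving R 𝒳) : IsResolving R (syzPreimage 𝒳) where
  fg := by
    rintro M ⟨K, P, i, p, hp, _, -, -⟩
    exact Module.Finite.of_surjective p hp.2.1
  iso_closed := by
    rintro M N ⟨e⟩ ⟨K, P, i, p, hp, hfin, hproj, hK⟩
    exact ⟨K, P, i, _, hp.comp_equiv e, hfin, hproj, hK⟩
  proj_mem M _ _ := h𝒳.subset_syzPreimage (h𝒳.proj_mem M ‹_› ‹_›)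
  summand_closed M N h := by
    obtain ⟨K, P, i, p, hp, _, _, _⟩ := id h
    have : Module.Finite R (M × N) := Module.Finite.of_surjective p hp.2.1
    have := Module.Finite.of_surjective (LinearMap.fst R M N) LinearMap.fst_surjective
    have := Module.Finite.of_surjective (LinearMap.snd R M N) LinearMap.snd_surjective
    exact h𝒳.syzPreimage_mem_of_prod_mem h
  ext_closed A B C f g h := h𝒳.syzPreimage_mem_of_isSES h
  syzygy_closed K P M f g h _ _ _ hM :=
    h𝒳.subset_syzPreimage (h𝒳.ker_mem h (h𝒳.mem_of_projective P) hM)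

lemma iterate_syzPreimage (h𝒳 : IsResolving R 𝒳) (n : ℕ) :
    IsResolving R (syzPreimage^[n] 𝒳) :=
  Function.Iterate.rec _ h𝒳 (fun _ h => IsResolving.syzPreimage h) n

lemma monotone_iterate_syzPreimage (h𝒳 : IsResolving R 𝒳) :
    Monotone fun n => syzPreimage^[n] 𝒳 :=
  monotone_nat_of_le_succ fun n => by
    rw [Function.iterate_succ_apply']
    exact (h𝒳.iterate_syzPreimage n).subset_syzPreimage

protected theorem syzSaturation (h𝒳 : IsResolving R 𝒳) : IsResolving R (syzSaturation 𝒳) where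
  fg M hM := by
    obtain ⟨n, hM⟩ := Set.mem_iUnion.mp hM
    exact (h𝒳.iterate_syzPreimage n).fg M hM
  iso_closed M N e hM := by
    obtain ⟨n, hM⟩ := Set.mem_iUnion.mp hM
    exact Set.mem_iUnion.mpr ⟨n, (h𝒳.iterate_syzPreimage n).iso_closed M N e hM⟩
  proj_mem M hfin hproj := Set.mem_iUnion.mpr ⟨0, h𝒳.proj_mem M hfin hproj⟩
  summand_closed M N h := by
    obtain ⟨n, h⟩ := Set.mem_iUnion.mp h
    exact Set.mem_iUnion.mpr ⟨n, (h𝒳.iterate_syzPreimage n).summand_closed M N h⟩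
  ext_closed A B C f g h hA hC := by
    obtain ⟨m, hA⟩ := Set.mem_iUnion.mp hA
    obtain ⟨n, hC⟩ := Set.mem_iUnion.mp hC
    exact Set.mem_iUnion.mpr ⟨max m n, (h𝒳.iterate_syzPreimage _).ext_closed A B C f g h
      (h𝒳.monotone_iterate_syzPreimage (le_max_left m n) hA)
      (h𝒳.monotone_iterate_syzPreimage (le_max_right m n) hC)⟩
  syzygy_closed K P M f g h hK hP hproj hM := by
    obtain ⟨n, hM⟩ := Set.mem_iUnion.mp hM
    exact Set.mem_iUnion.mpr
      ⟨n, (h𝒳.iterate_syzPreimage n).syzygy_closed K P M f g h hK hP hproj hM⟩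

theorem mem_of_forall_quotient_prime_mem [hM : Module.Finite R M] (h𝒳 : IsResolving R 𝒳)
    (h : ∀ q : PrimeSpectrum R, Module.annihilator R M ≤ q.asIdeal →
      ModuleCat.of R (R ⧸ q.asIdeal) ∈ 𝒳) : ModuleCat.of R M ∈ 𝒳 := by
  induction hM using IsNoetherianRing.induction_on_isQuotientEquivQuotientPrime R with
  | subsingleton N => exact h𝒳.mem_of_projective N
  | quotient N p e =>
    refine h𝒳.mem_of_equiv e.symm (h p ?_)
    rw [e.annihilator_eq, Ideal.annihilator_quotient]
  | exact N₁ N₂ N₃ f g hf hg hfg h₁ h₃ =>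
    exact h𝒳.mem_of_isSES (isSES_iff_exact.mpr ⟨hf, hg, hfg⟩)
      (h₁ fun q hq => h q ((f.annihilator_le_of_injective hf).trans hq))
      (h₃ fun q hq => h q ((g.annihilator_le_of_surjective hg).trans hq))

end IsResolving

theorem mem_iterate_syzPreimage_iff (h𝒳 : IsResolving R 𝒳) {n : ℕ} {M : ModuleCat.{u} R} :
    M ∈ syzPreimage^[n] 𝒳 ↔ ∃ K, IsSyz R n M K ∧ K ∈ 𝒳 := by
  induction n generalizing M with
  | zero =>
    refine ⟨fun hM => ⟨M, ⟨LinearEquiv.refl R M⟩, hM⟩, ?_⟩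
    rintro ⟨K, e, hK⟩
    exact h𝒳.iso_closed K M e hK
  | succ n ih =>
    rw [Function.iterate_succ_apply']
    constructor
    · rintro ⟨K', P, i, p, ⟨hi, hp, hip⟩, hfin, hproj, hK'⟩
      obtain ⟨K, hK, hmem⟩ := ih.mp hK'
      exact ⟨K, ⟨P, p, K', i, hfin, hproj, hp, hi, hip, hK⟩, hmem⟩
    · rintro ⟨K, ⟨P, p, K', i, hfin, hproj, hp, hi, hip, hK⟩, hmem⟩
      exact ⟨K', P, i, p, ⟨hi, hp, hip⟩, hfin, hproj, ih.mpr ⟨K, hK, hmem⟩⟩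

lemma IsSyz.mem_syzSaturation [IsNoetherianRing R] (h𝒳 : IsResolving R 𝒳) {n : ℕ}
    {M K : ModuleCat.{u} R} (h : IsSyz R n M K) (hK : K ∈ syzSaturation 𝒳) :
    M ∈ syzSaturation 𝒳 := by
  obtain ⟨m, hK⟩ := Set.mem_iUnion.mp hK
  refine Set.mem_iUnion.mpr ⟨n + m, ?_⟩
  rw [Function.iterate_add_apply]
  exact (mem_iterate_syzPreimage_iff (h𝒳.iterate_syzPreimage m)).mpr ⟨K, h, hK⟩

end Resolving

section Syzygies

variable {R}

/-- Two modules are stably isomorphic if they become isomorphic after adding finitely generated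
projective modules; by Schanuel's lemma, syzygies are well defined up to this relation. -/
def StablyIso (M N : ModuleCat.{u} R) : Prop :=
  ∃ P Q : ModuleCat.{u} R, (Module.Finite R P ∧ Module.Projective R P) ∧
    (Module.Finite R Q ∧ Module.Projective R Q) ∧ Nonempty ((M × P) ≃ₗ[R] (N × Q))

lemma StablyIso.of_equiv {M N : ModuleCat.{u} R} (e : M ≃ₗ[R] N) : StablyIso M N :=
  ⟨ModuleCat.of R PUnit, ModuleCat.of R PUnit, ⟨inferInstance, inferInstance⟩,
    ⟨inferInstance, inferInstance⟩, ⟨e.prodCongr (LinearEquiv.refl R _)⟩⟩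

lemma StablyIso.of_isSES {K L M N P Q : ModuleCat.{u} R} [Module.Finite R P]
    [Module.Projective R P] [Module.Finite R Q] [Module.Projective R Q]
    {i : K →ₗ[R] P} {p : P →ₗ[R] M} {j : L →ₗ[R] Q} {q : Q →ₗ[R] N}
    (hp : IsSES i p) (hq : IsSES j q) : StablyIso M N → StablyIso K L := by
  rintro ⟨P', Q', ⟨_, _⟩, ⟨_, _⟩, ⟨e⟩⟩
  exact ⟨ModuleCat.of R (Q × Q'), ModuleCat.of R (P × P'),
    ⟨inferInstanceAs (Module.Finite R (Q × Q')), inferInstanceAs (Module.Projective R (Q × Q'))⟩,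
    ⟨inferInstanceAs (Module.Finite R (P × P')), inferInstanceAs (Module.Projective R (P × P'))⟩,
    ((hp.prodMap_id P').comp_equiv e).schanuel (hq.prodMap_id Q')⟩

lemma StablyIso.of_isSyz {n : ℕ} {K L M N : ModuleCat.{u} R} (hK : IsSyz R n M K)
    (hL : IsSyz R n N L) (h : StablyIso M N) : StablyIso K L := by
  induction n generalizing M N with
  | zero =>
    obtain ⟨e⟩ := hK
    obtain ⟨e'⟩ := hL
    obtain ⟨P, Q, hP, hQ, ⟨ε⟩⟩ := h
    exact ⟨P, Q, hP, hQ, ⟨(e.prodCongr (LinearEquiv.refl R P)).trans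
      (ε.trans (e'.symm.prodCongr (LinearEquiv.refl R Q)))⟩⟩
  | succ n ih =>
    obtain ⟨P, p, K', i, _, _, hp, hi, hip, hK⟩ := hK
    obtain ⟨Q, q, L', j, _, _, hq, hj, hjq, hL⟩ := hL
    exact ih hK hL (.of_isSES ⟨hi, hp, hip⟩ ⟨hj, hq, hjq⟩ h)

lemma exists_isSyz [IsNoetherianRing R] (n : ℕ) (M : ModuleCat.{u} R) [Module.Finite R M] :
    ∃ K, IsSyz R n M K ∧ Module.Finite R K := by
  induction n generalizing M with
  | zero => exact ⟨M, ⟨LinearEquiv.refl R M⟩, inferInstance⟩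
  | succ n ih =>
    obtain ⟨m, g, hg⟩ := Module.Finite.exists_fin' R M
    obtain ⟨K, hK, hfin⟩ := ih (ModuleCat.of R (LinearMap.ker g))
    exact ⟨K, ⟨ModuleCat.of R (Fin m → R), g, _, (LinearMap.ker g).subtype, inferInstance,
      inferInstance, hg, Subtype.val_injective, Submodule.range_subtype _, hK⟩, hfin⟩

variable [IsLocalRing R]

lemma IsMinSyz.isSyz {n : ℕ} {M K : ModuleCat.{u} R} (h : IsMinSyz R n M K) :
    IsSyz R n M K := by
  induction n generalizing M with
  | zero => exact h
  | succ n ih =>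
    obtain ⟨F, g, K', i, hfin, hfree, hg, -, hi, hig, hK⟩ := h
    exact ⟨F, g, K', i, hfin, .of_free, hg, hi, hig, ih hK⟩

open scoped TensorProduct in
lemma exists_minimal_free_cover (M : Type u) [AddCommGroup M] [Module R M] [Module.Finite R M] :
    ∃ (n : ℕ) (g : (Fin n → R) →ₗ[R] M), Function.Surjective g ∧
      LinearMap.ker g ≤ IsLocalRing.maximalIdeal R • (⊤ : Submodule R (Fin n → R)) := by
  let b := Module.finBasis (IsLocalRing.ResidueField R) (IsLocalRing.ResidueField R ⊗[R] M)
  choose v hv using fun i =>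
    TensorProduct.mk_surjective R M (IsLocalRing.ResidueField R) IsLocalRing.residue_surjective
      (b i)
  refine ⟨_, Fintype.linearCombination R v, ?_, fun x hx => ?_⟩
  · rw [← LinearMap.range_eq_top, Fintype.range_linearCombination]
    exact IsLocalRing.span_eq_top_of_tmul_eq_basis v b hv
  · have hsum : ∑ i, IsLocalRing.residue R (x i) • b i = 0 := by
      have := congrArg (TensorProduct.mk R (IsLocalRing.ResidueField R) M 1) hx
      simpa [Fintype.linearCombination_apply, hv, ← IsLocalRing.ResidueField.algebraMap_eq]
        using this
    have hcoeff := Fintype.linearIndependent_iff.mp b.linearIndependent _ hsum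
    rw [pi_eq_sum_univ' x]
    exact Submodule.sum_mem _ fun i _ => Submodule.smul_mem_smul
      ((IsLocalRing.residue_eq_zero_iff _).mp (hcoeff i)) trivial

lemma exists_isMinSyz [IsNoetherianRing R] (n : ℕ) (M : ModuleCat.{u} R) [Module.Finite R M] :
    ∃ K, IsMinSyz R n M K := by
  induction n generalizing M with
  | zero => exact ⟨M, ⟨LinearEquiv.refl R M⟩⟩
  | succ n ih =>
    obtain ⟨m, g, hg, hmin⟩ := exists_minimal_free_cover (R := R) M
    obtain ⟨K, hK⟩ := ih (ModuleCat.of R (LinearMap.ker g))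
    exact ⟨K, ModuleCat.of R (Fin m → R), g, _, (LinearMap.ker g).subtype, inferInstance,
      inferInstance, hg, hmin, Subtype.val_injective, Submodule.range_subtype _, hK⟩

end Syzygies

section Localization

variable {R}

/-- Any localization of `M` is, over the localized ring, the standard one. -/
noncomputable def localizedModuleEquiv (S : Submonoid R) {M N : Type u} [AddCommGroup M]
    [Module R M] [AddCommGroup N] [Module R N] [Module (Localization S) N]
    [IsScalarTower R (Localization S) N] (f : M →ₗ[R] N) [IsLocalizedModule S f] :
    LocalizedModule S M ≃ₗ[Localization S] N :=
  (IsLocalizedModule.iso S f).extendScalarsOfIsLocalization S (Localization S)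

lemma exists_comp_eq_smul_of_localized_retract (S : Submonoid R) {A X : Type u} [AddCommGroup A]
    [Module R A] [AddCommGroup X] [Module R X] [Module.FinitePresentation R A]
    [Module.FinitePresentation R X] (i : LocalizedModule S A →ₗ[R] LocalizedModule S X)
    (r : LocalizedModule S X →ₗ[R] LocalizedModule S A) (hri : r ∘ₗ i = LinearMap.id) :
    ∃ (f : A →ₗ[R] X) (g : X →ₗ[R] A), ∃ s ∈ S, ∀ a, g (f a) = s • a := by
  obtain ⟨f, s, hf⟩ := Module.FinitePresentation.exists_lift_of_isLocalizedModule S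
    (LocalizedModule.mkLinearMap S X) (i ∘ₗ LocalizedModule.mkLinearMap S A)
  obtain ⟨g, t, hg⟩ := Module.FinitePresentation.exists_lift_of_isLocalizedModule S
    (LocalizedModule.mkLinearMap S A) (r ∘ₗ LocalizedModule.mkLinearMap S X)
  have hgf : LocalizedModule.mkLinearMap S A ∘ₗ g ∘ₗ f =
      LocalizedModule.mkLinearMap S A ∘ₗ ((t * s) • LinearMap.id) := by
    rw [← LinearMap.comp_assoc, hg, LinearMap.smul_comp, LinearMap.comp_assoc, hf,
      LinearMap.comp_smul, ← LinearMap.comp_assoc, hri, LinearMap.id_comp, smul_smul,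
      LinearMap.comp_smul, LinearMap.comp_id]
  obtain ⟨c, hc⟩ := Module.Finite.exists_smul_of_comp_eq_of_isLocalizedModule S _ _ _ hgf
  refine ⟨f, c • g, c * (t * s), (c * (t * s)).2, fun a => ?_⟩
  rw [mul_smul]
  exact LinearMap.congr_fun hc a

lemma IsSyz.localize (p : PrimeSpectrum R) {n : ℕ} {M K : ModuleCat.{u} R}
    (h : IsSyz R n M K) :
    IsSyz (Localization.AtPrime p.asIdeal) n (localizeM R p M) (localizeM R p K) := by
  induction n generalizing M with
  | zero =>
    obtain ⟨e⟩ := h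
    exact ⟨localizedModuleEquiv _ (LocalizedModule.mkLinearMap _ M ∘ₗ e.toLinearMap)⟩
  | succ n ih =>
    obtain ⟨F, g, K', i, _, _, hg, hi, hig, hK⟩ := h
    have hbase := IsLocalizedModule.isBaseChange p.asIdeal.primeCompl
      (Localization.AtPrime p.asIdeal) (LocalizedModule.mkLinearMap p.asIdeal.primeCompl F)
    have hexact : Function.Exact (LocalizedModule.map p.asIdeal.primeCompl i)
        (LocalizedModule.map p.asIdeal.primeCompl g) :=
      LocalizedModule.map_exact p.asIdeal.primeCompl i g (LinearMap.exact_iff.mpr hig.symm)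
    exact ⟨localizeM R p F, LocalizedModule.map p.asIdeal.primeCompl g, localizeM R p K',
      LocalizedModule.map p.asIdeal.primeCompl i,
      Module.Finite.of_isLocalizedModule p.asIdeal.primeCompl
        (LocalizedModule.mkLinearMap p.asIdeal.primeCompl F),
      .of_equiv hbase.equiv, LocalizedModule.map_surjective _ g hg,
      LocalizedModule.map_injective _ i hi,
      (LinearMap.exact_iff.mp hexact).symm, ih hK⟩

lemma nonempty_localized_quotient_equiv_residueField (p : PrimeSpectrum R) :
    Nonempty (LocalizedModule p.asIdeal.primeCompl (R ⧸ p.asIdeal)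
      ≃ₗ[Localization.AtPrime p.asIdeal]
        IsLocalRing.ResidueField (Localization.AtPrime p.asIdeal)) := by
  have hmax : Submodule.localized' (Localization.AtPrime p.asIdeal) p.asIdeal.primeCompl
      (Algebra.linearMap R (Localization.AtPrime p.asIdeal)) p.asIdeal =
      IsLocalRing.maximalIdeal (Localization.AtPrime p.asIdeal) := by
    rw [Submodule.localized'_eq_span, ← Localization.AtPrime.map_eq_maximalIdeal]
    rfl
  exact ⟨(localizedModuleEquiv p.asIdeal.primeCompl (Submodule.toLocalizedQuotient'
    (Localization.AtPrime p.asIdeal) p.asIdeal.primeCompl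
      (Algebra.linearMap R (Localization.AtPrime p.asIdeal)) p.asIdeal)).trans
    (Submodule.quotEquivOfEq _ _ hmax)⟩

variable {𝒳 : Set (ModuleCat.{u} R)} {p : PrimeSpectrum R}

lemma memAddLocal_iff (h𝒳 : IsResolving R 𝒳)
    {N : ModuleCat.{u} (Localization.AtPrime p.asIdeal)} :
    memAddLocal R 𝒳 p N ↔ ∃ X ∈ 𝒳, ∃ N' : ModuleCat.{u} (Localization.AtPrime p.asIdeal),
      Nonempty ((N × N') ≃ₗ[Localization.AtPrime p.asIdeal] localizeM R p X) := by
  constructor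
  · rintro ⟨n, X, hX, N', ⟨e⟩⟩
    have := IsLocalizedModule.pi p.asIdeal.primeCompl fun i =>
      LocalizedModule.mkLinearMap p.asIdeal.primeCompl (X i)
    exact ⟨_, h𝒳.pi_mem hX, N', ⟨e.trans (localizedModuleEquiv p.asIdeal.primeCompl
      (.pi fun i => LocalizedModule.mkLinearMap p.asIdeal.primeCompl (X i) ∘ₗ .proj i)).symm⟩⟩
  · rintro ⟨X, hX, N', ⟨e⟩⟩
    exact ⟨1, fun _ => X, fun _ => hX, N', ⟨e.trans (LinearEquiv.funUnique (Fin 1) _ _).symm⟩⟩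

lemma exists_prod_equiv_localized_free (P : ModuleCat.{u} (Localization.AtPrime p.asIdeal))
    [Module.Finite (Localization.AtPrime p.asIdeal) P]
    [Module.Projective (Localization.AtPrime p.asIdeal) P] :
    ∃ (n : ℕ) (Q : ModuleCat.{u} (Localization.AtPrime p.asIdeal)),
      Nonempty ((P × Q) ≃ₗ[Localization.AtPrime p.asIdeal]
        LocalizedModule p.asIdeal.primeCompl (Fin n → R)) := by
  obtain ⟨n, g, hg⟩ := Module.Finite.exists_fin' (Localization.AtPrime p.asIdeal) P
  have := IsLocalizedModule.pi p.asIdeal.primeCompl fun _ : Fin n =>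
    Algebra.linearMap R (Localization.AtPrime p.asIdeal)
  obtain ⟨e⟩ := (isSES_ker_subtype hg).nonempty_equiv_prod
  exact ⟨n, ModuleCat.of _ (LinearMap.ker g), ⟨(LinearEquiv.prodComm _ _ _).trans
    (e.symm.trans (localizedModuleEquiv p.asIdeal.primeCompl
      (.pi fun i : Fin n =>
        Algebra.linearMap R (Localization.AtPrime p.asIdeal) ∘ₗ .proj i)).symm)⟩⟩

lemma memAddLocal_of_stablyIso (h𝒳 : IsResolving R 𝒳)
    {M N : ModuleCat.{u} (Localization.AtPrime p.asIdeal)} (h : StablyIso M N)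
    (hN : memAddLocal R 𝒳 p N) : memAddLocal R 𝒳 p M := by
  obtain ⟨P, Q, -, ⟨_, _⟩, ⟨e⟩⟩ := h
  obtain ⟨X, hX, N', ⟨eX⟩⟩ := (memAddLocal_iff h𝒳).mp hN
  obtain ⟨n, Q', ⟨eQ⟩⟩ := exists_prod_equiv_localized_free Q
  have := IsLocalizedModule.prodMap p.asIdeal.primeCompl
    (LocalizedModule.mkLinearMap p.asIdeal.primeCompl X)
    (LocalizedModule.mkLinearMap p.asIdeal.primeCompl (Fin n → R))
  refine (memAddLocal_iff h𝒳).mpr ⟨ModuleCat.of R (X × (Fin n → R)),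
    h𝒳.prod_mem hX (h𝒳.mem_of_projective _), ModuleCat.of _ (P × (N' × Q')), ⟨?_⟩⟩
  exact (LinearEquiv.prodAssoc _ M P (N' × Q')).symm.trans <|
    (e.prodCongr (LinearEquiv.refl _ (N' × Q'))).trans <|
    (LinearEquiv.prodProdProdComm _ N Q N' Q').trans <|
    (eX.prodCongr eQ).trans (localizedModuleEquiv p.asIdeal.primeCompl
      (.prodMap (LocalizedModule.mkLinearMap p.asIdeal.primeCompl X)
        (LocalizedModule.mkLinearMap p.asIdeal.primeCompl (Fin n → R)))).symm

theorem dominant_iff_exists_isSyz_memAddLocal [IsNoetherianRing R] (h𝒳 : IsResolving R 𝒳) :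
    Dominant R 𝒳 ↔ ∀ p : PrimeSpectrum R, ∃ (n : ℕ) (A : ModuleCat.{u} R),
      IsSyz R n (ModuleCat.of R (R ⧸ p.asIdeal)) A ∧ Module.Finite R A ∧
        memAddLocal R 𝒳 p (localizeM R p A) := by
  refine ⟨fun h p => ?_, fun h p _ => ?_⟩
  all_goals obtain ⟨e⟩ := nonempty_localized_quotient_equiv_residueField p
  · obtain ⟨n, K, hK, hmem⟩ := h p trivial
    obtain ⟨A, hA, hfin⟩ := exists_isSyz n (ModuleCat.of R (R ⧸ p.asIdeal))
    exact ⟨n, A, hA, hfin, memAddLocal_of_stablyIso h𝒳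
      (.of_isSyz (hA.localize p) hK.isSyz (.of_equiv e)) hmem⟩
  · obtain ⟨n, A, hA, -, hmem⟩ := h p
    have := IsLocalization.isNoetherianRing p.asIdeal.primeCompl
      (Localization.AtPrime p.asIdeal) inferInstance
    obtain ⟨K, hK⟩ := exists_isMinSyz n (residueMod (Localization.AtPrime p.asIdeal))
    exact ⟨n, K, hK, memAddLocal_of_stablyIso h𝒳
      (.of_isSyz hK.isSyz (hA.localize p) (.of_equiv e.symm)) hmem⟩

/-- Dominance, descended from `R_p` to `R`: a syzygy of `R ⧸ p` becomes a retract of an object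
of `𝒳` after inverting a single element outside `p`. -/
lemma Dominant.exists_isSyz_comp_eq_smul [IsNoetherianRing R] (hdom : Dominant R 𝒳)
    (h𝒳 : IsResolving R 𝒳) (p : PrimeSpectrum R) :
    ∃ (n : ℕ) (A X : ModuleCat.{u} R) (f : A →ₗ[R] X) (g : X →ₗ[R] A), ∃ s ∉ p.asIdeal,
      IsSyz R n (ModuleCat.of R (R ⧸ p.asIdeal)) A ∧ Module.Finite R A ∧ X ∈ 𝒳 ∧
        ∀ a, g (f a) = s • a := by
  obtain ⟨n, A, hA, hfin, hmem⟩ := (dominant_iff_exists_isSyz_memAddLocal h𝒳).mp hdom p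
  obtain ⟨X, hX, N', ⟨e⟩⟩ := (memAddLocal_iff h𝒳).mp hmem
  have := h𝒳.fg X hX
  have := Module.finitePresentation_of_finite R A
  have := Module.finitePresentation_of_finite R X
  obtain ⟨f, g, s, hs, hgf⟩ := exists_comp_eq_smul_of_localized_retract p.asIdeal.primeCompl
    ((e.toLinearMap ∘ₗ LinearMap.inl _ _ N').restrictScalars R)
    ((LinearMap.fst _ _ N' ∘ₗ e.symm.toLinearMap).restrictScalars R)
    (LinearMap.ext fun a => by simp)
  exact ⟨n, A, X, f, g, s, hs, hA, hfin, hX, hgf⟩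

end Localization

section Saturation

open scoped Pointwise

variable {R} {𝒴 : Set (ModuleCat.{u} R)}

lemma isSES_lsmul_mkQ {M : Type u} [AddCommGroup M] [Module R M] {r : R}
    (hr : IsSMulRegular M r) :
    IsSES (LinearMap.lsmul R M r) (r • (⊤ : Submodule R M)).mkQ :=
  ⟨hr, Submodule.mkQ_surjective _, by
    rw [Submodule.ker_mkQ, LinearMap.range_eq_map]
    rfl⟩

/-- For every finite projective cover `π : F → M`, the fibre product of multiplication by `s` on
`M` with `π` lies in `𝒴`. This fibre product is a model, up to projective summands, of the
homotopy fibre of `s`: unlike `M / sM`, it remains well behaved on syzygies of `M`, where `s` may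
be a zero divisor. -/
def SMulFiberMem (𝒴 : Set (ModuleCat.{u} R)) (s : R) (M : Type u) [AddCommGroup M]
    [Module R M] : Prop :=
  ∀ (F : ModuleCat.{u} R) (π : F →ₗ[R] M), Module.Finite R F → Module.Projective R F →
    Function.Surjective π → ModuleCat.of R (fiberProd (LinearMap.lsmul R M s) π) ∈ 𝒴

namespace SMulFiberMem

variable {s : R} {K M X : Type u} [AddCommGroup K] [Module R K] [AddCommGroup M] [Module R M]
  [AddCommGroup X] [Module R X]

lemma of_quotSMulTop_mem [IsNoetherianRing R] (h𝒴 : IsResolving R 𝒴) (hs : IsSMulRegular M s)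
    (hquot : ModuleCat.of R (QuotSMulTop s M) ∈ 𝒴) : SMulFiberMem 𝒴 s M := fun F _ _ _ hπ =>
  h𝒴.ker_mem ((isSES_lsmul_mkQ hs).fiberProd_snd_comp hπ) (h𝒴.mem_of_projective F)
    (h𝒴.subset_syzPreimage hquot)

lemma congr (h𝒴 : IsResolving R 𝒴) (e : K ≃ₗ[R] M) (h : SMulFiberMem 𝒴 s M) :
    SMulFiberMem 𝒴 s K := fun F π hfin hproj hπ => by
  have hcomap : (fiberProd (LinearMap.lsmul R M s) (e.toLinearMap ∘ₗ π)).comap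
      (e.prodCongr (LinearEquiv.refl R F)).toLinearMap = fiberProd (LinearMap.lsmul R K s) π := by
    ext x
    simp [mem_fiberProd, ← map_smul]
  rw [← hcomap]
  exact h𝒴.mem_of_equiv ((e.prodCongr (LinearEquiv.refl R F)).ofSubmodule' _).symm
    (h F (e.toLinearMap ∘ₗ π) hfin hproj (e.surjective.comp hπ))

lemma exists_isSES_of_isSES (s : R) {F G : Type u} [AddCommGroup F] [Module R F]
    [AddCommGroup G] [Module R G] {ι : K →ₗ[R] F} {π : F →ₗ[R] M} (h : IsSES ι π)
    {ρ : G →ₗ[R] K} (hρ : Function.Surjective ρ) :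
    ∃ (i : fiberProd (LinearMap.lsmul R K s) ρ →ₗ[R] F × G)
      (q : F × G →ₗ[R] fiberProd (LinearMap.lsmul R M s) π), IsSES i q := by
  have hmem (x : F × G) : (π.prodMap LinearMap.id) (x.1, s • x.1 - ι (ρ x.2)) ∈
      fiberProd (LinearMap.lsmul R M s) π := by
    simp [mem_fiberProd, h.exact.apply_apply_eq_zero]
  refine ⟨ι.prodMap LinearMap.id ∘ₗ Submodule.subtype _,
    ((π ∘ₗ LinearMap.fst R F G).prod
      (s • LinearMap.fst R F G - ι ∘ₗ ρ ∘ₗ LinearMap.snd R F G)).codRestrict _ hmem,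
    isSES_iff_exact.mpr ⟨(h.1.prodMap Function.injective_id).comp Subtype.val_injective, ?_, ?_⟩⟩
  · rintro ⟨⟨m, z⟩, hmz⟩
    obtain ⟨x, rfl⟩ := h.2.1 m
    obtain ⟨k, hk⟩ := (h.exact (s • x - z)).mp
      (by simpa [sub_eq_zero] using mem_fiberProd.mp hmz)
    obtain ⟨y, rfl⟩ := hρ k
    refine ⟨(x, y), Subtype.ext (Prod.ext rfl ?_)⟩
    change s • x - ι (ρ y) = z
    rw [hk, sub_sub_cancel]
  · rintro ⟨x, y⟩
    constructor
    · intro hxy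
      obtain ⟨k, rfl⟩ := (h.exact x).mp congr(($hxy).1.1)
      have hk : s • ι k - ι (ρ y) = 0 := congr(($hxy).1.2)
      rw [← map_smul, sub_eq_zero] at hk
      exact ⟨⟨(k, y), h.1 hk⟩, rfl⟩
    · rintro ⟨⟨⟨k, y⟩, hky⟩, hxy⟩
      obtain ⟨rfl, rfl⟩ := Prod.ext_iff.mp hxy
      refine Subtype.ext (Prod.ext (h.exact.apply_apply_eq_zero k) ?_)
      change s • ι k - ι (ρ y) = 0
      rw [← map_smul, sub_eq_zero]
      exact congrArg ι (mem_fiberProd.mp hky)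

lemma of_isSyz [IsNoetherianRing R] (h𝒴 : IsResolving R 𝒴) {n : ℕ} {K M : ModuleCat.{u} R}
    (hK : IsSyz R n M K) (h : SMulFiberMem 𝒴 s M) : SMulFiberMem 𝒴 s K := by
  induction n generalizing M with
  | zero =>
    obtain ⟨e⟩ := hK
    exact h.congr h𝒴 e
  | succ n ih =>
    obtain ⟨F, π, K', ι, hfin, hproj, hπ, hι, hιπ, hK⟩ := hK
    refine ih hK fun G ρ _ _ hρ => ?_
    obtain ⟨i, q, hiq⟩ := exists_isSES_of_isSES s ⟨hι, hπ, hιπ⟩ hρ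
    exact h𝒴.ker_mem hiq (h𝒴.mem_of_projective _) (h𝒴.subset_syzPreimage (h F π hfin hproj hπ))

lemma exists_isSES_of_comp_eq_smul {F : Type u} [AddCommGroup F] [Module R F]
    {π : F →ₗ[R] M} (hπ : Function.Surjective π) {f : M →ₗ[R] X} {g : X →ₗ[R] M}
    (hgf : ∀ m, g (f m) = s • m) :
    ∃ (i : fiberProd (LinearMap.lsmul R M s) π →ₗ[R] M × fiberProd g π)
      (q : M × fiberProd g π →ₗ[R] X), IsSES i q := by
  have hmem (y : fiberProd (LinearMap.lsmul R M s) π) : (f y.1.1, y.1.2) ∈ fiberProd g π :=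
    (hgf y.1.1).trans y.2
  refine ⟨(LinearMap.fst R M F ∘ₗ Submodule.subtype _).prod
      ((f.prodMap LinearMap.id ∘ₗ Submodule.subtype _).codRestrict _ hmem),
    LinearMap.fst R X F ∘ₗ Submodule.subtype _ ∘ₗ LinearMap.snd R M _ - f ∘ₗ LinearMap.fst R M _,
    isSES_iff_exact.mpr ⟨?_, fun x => ?_, ?_⟩⟩
  · exact fun y y' h => Subtype.ext (Prod.ext congr(($h).1) congr(($h).2.1.2))
  · obtain ⟨z, hz⟩ := hπ (g x)
    exact ⟨(0, ⟨(x, z), hz.symm⟩), by simp⟩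
  · rintro ⟨m, ⟨⟨x, z⟩, hxz⟩⟩
    constructor
    · intro h
      obtain rfl : x = f m := sub_eq_zero.mp h
      exact ⟨⟨(m, z), (hgf m).symm.trans hxz⟩, rfl⟩
    · rintro ⟨y, hy⟩
      rw [← hy]
      exact sub_self _

/-- If `s` factors through `X` then `M ⊕ (X ×_M F)` is an extension of `X` by the fibre of `s`. -/
lemma mem_of_comp_eq_smul (h𝒴 : IsResolving R 𝒴) [Module.Finite R M] (h : SMulFiberMem 𝒴 s M)
    {f : M →ₗ[R] X} {g : X →ₗ[R] M} (hgf : ∀ m, g (f m) = s • m)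
    (hX : ModuleCat.of R X ∈ 𝒴) : ModuleCat.of R M ∈ 𝒴 := by
  obtain ⟨n, π, hπ⟩ := Module.Finite.exists_fin' R M
  obtain ⟨i, q, hiq⟩ := exists_isSES_of_comp_eq_smul hπ hgf
  exact h𝒴.mem_of_prod_mem (h𝒴.mem_of_isSES hiq
    (h (ModuleCat.of R (Fin n → R)) π inferInstance inferInstance hπ) hX)

end SMulFiberMem

lemma smulFiberMem_quotient_prime [IsNoetherianRing R] (h𝒴 : IsResolving R 𝒴)
    {p : PrimeSpectrum R} (hp : ∀ q > p, ModuleCat.of R (R ⧸ q.asIdeal) ∈ 𝒴) {s : R}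
    (hs : s ∉ p.asIdeal) : SMulFiberMem 𝒴 s (R ⧸ p.asIdeal) := by
  have hregular : IsSMulRegular (R ⧸ p.asIdeal) s :=
    (isSMulRegular_quotient_iff_mem_of_smul_mem _ s).mpr fun _ hx =>
      (p.isPrime.mem_or_mem hx).resolve_left hs
  refine .of_quotSMulTop_mem h𝒴 hregular (h𝒴.mem_of_forall_quotient_prime_mem fun q hq => hp q ?_)
  have hpq : p.asIdeal ≤ q.asIdeal := (Ideal.annihilator_quotient (I := p.asIdeal)).ge.trans
    ((LinearMap.annihilator_le_of_surjective (s • (⊤ : Submodule R (R ⧸ p.asIdeal))).mkQ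
      (Submodule.mkQ_surjective _)).trans hq)
  exact lt_of_le_of_ne hpq fun h => hs (h ▸ hq (QuotSMulTop.mem_annihilator _ s))

theorem Dominant.quotient_prime_mem_syzSaturation [IsNoetherianRing R]
    {𝒳 : Set (ModuleCat.{u} R)} (hdom : Dominant R 𝒳) (h𝒳 : IsResolving R 𝒳)
    (p : PrimeSpectrum R) : ModuleCat.of R (R ⧸ p.asIdeal) ∈ syzSaturation 𝒳 := by
  have hwf : WellFounded fun q q' : PrimeSpectrum R => q > q' :=
    InvImage.wf PrimeSpectrum.asIdeal wellFounded_gt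
  induction p using hwf.induction with
  | _ p ih =>
    obtain ⟨n, A, X, f, g, s, hs, hA, _, hX, hgf⟩ := hdom.exists_isSyz_comp_eq_smul h𝒳 p
    have hfiber : SMulFiberMem (syzSaturation 𝒳) s A :=
      .of_isSyz h𝒳.syzSaturation hA (smulFiberMem_quotient_prime h𝒳.syzSaturation ih hs)
    exact hA.mem_syzSaturation h𝒳 (hfiber.mem_of_comp_eq_smul h𝒳.syzSaturation hgf
      (Set.mem_iUnion.mpr ⟨0, hX⟩))

end Saturation

section Depth

open RingTheory.Sequence CategoryTheory.Abelian

variable {R}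

lemma subsingleton_linearMap_of_subsingleton_ext (N : ModuleCat.{u} R) (rs : List R)
    (M : ModuleCat.{u} R) (hrs : IsWeaklyRegular M rs)
    (hext : ∀ j ≤ rs.length, Subsingleton (Ext N M j)) :
    Subsingleton (N →ₗ[R] M ⧸ (Ideal.ofList rs • ⊤ : Submodule R M)) := by
  induction rs generalizing M with
  | nil =>
    have : Subsingleton (N ⟶ M) := Ext.addEquiv₀.subsingleton_congr.mp (hext 0 le_rfl)
    have : Subsingleton (N →ₗ[R] M) := ModuleCat.homAddEquiv.symm.subsingleton
    exact (Submodule.quotEquivOfEqBot _ (by simp)).congrRight.subsingleton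
  | cons r rs ih =>
    rw [isWeaklyRegular_cons_iff] at hrs
    have hquot : ∀ j ≤ rs.length, Subsingleton (Ext N (ModuleCat.of R (QuotSMulTop r M)) j) := by
      intro j hj
      have hj₀ := AddCommGrpCat.isZero_of_iff_subsingleton.mpr
        (hext j (hj.trans (Nat.le_succ _)))
      have hj₁ := AddCommGrpCat.isZero_of_iff_subsingleton.mpr
        (hext (j + 1) (Nat.succ_le_succ hj))
      exact AddCommGrpCat.subsingleton_of_isZero <| ShortComplex.Exact.isZero_of_both_zeros
        (Ext.covariant_sequence_exact₃' N hrs.1.smulShortComplex_shortExact j (j + 1) rfl)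
        (hj₀.eq_zero_of_src _) (hj₁.eq_zero_of_tgt _)
    have := ih (ModuleCat.of R (QuotSMulTop r M)) hrs.2 hquot
    exact (Submodule.quotOfListConsSMulTopEquivQuotSMulTopInner M r rs).congrRight.subsingleton

lemma smul_top_ne_top_of_isPrime {M : Type u} [AddCommGroup M] [Module R M] [Module.Finite R M]
    {p : Ideal R} (hp : p.IsPrime) (hann : Module.annihilator R M ≤ p) :
    p • (⊤ : Submodule R M) ≠ ⊤ := by
  intro htop
  obtain ⟨r, hr, hrM⟩ := Submodule.exists_sub_one_mem_and_smul_eq_zero_of_fg_of_le_smul p ⊤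
    Module.Finite.fg_top htop.ge
  have hrp : r ∈ p := hann (Module.mem_annihilator.mpr fun m => hrM m trivial)
  exact hp.ne_top ((Ideal.eq_top_iff_one p).mpr (by simpa using p.sub_mem hrp hr))

variable [IsNoetherianRing R]

lemma subsingleton_ext_of_lt_depthE {I : Ideal R} {N M : ModuleCat.{u} R} [Module.Finite R N]
    [Module.Finite R M] (hN : Module.support R N ⊆ PrimeSpectrum.zeroLocus I)
    (hI : I • (⊤ : Submodule R M) ≠ ⊤) {j : ℕ} (hj : j < depthE R I M) :
    Subsingleton (Ext N M j) := by
  obtain ⟨_, ⟨rs, hrsI, hrs, rfl⟩, hlt⟩ := lt_sSup_iff.mp hj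
  have hle : Ideal.ofList rs ≤ I := Ideal.span_le.mpr hrsI
  have hregular : IsRegular M rs :=
    ⟨hrs, fun htop => hI (top_le_iff.mp (htop.le.trans (Submodule.smul_mono_left hle)))⟩
  exact ModuleCat.subsingleton_ext_of_exists_isRegular I N hN M hI.lt_top rs hrsI hregular j
    (by exact_mod_cast hlt)

/-- If the depth exceeded the length, then `Ext` vanishing would leave no room for the embedding
of `R ⧸ p` into `M / (rs)M`. -/
lemma depthE_le_length_of_mem_associatedPrimes {M : Type u} [AddCommGroup M] [Module R M]
    [Module.Finite R M] {rs : List R} (hrs : IsWeaklyRegular M rs) {p : Ideal R}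
    (hp : p ∈ associatedPrimes R (M ⧸ (Ideal.ofList rs • ⊤ : Submodule R M))) :
    depthE R p M ≤ rs.length := by
  by_contra! hlt
  obtain ⟨hprime, f, hf⟩ := (isAssociatedPrime_iff_exists_injective_linearMap _ _).mp hp
  have hann : Module.annihilator R M ≤ p := (LinearMap.annihilator_le_of_surjective _
    (Submodule.mkQ_surjective (Ideal.ofList rs • ⊤ : Submodule R M))).trans
    ((LinearMap.annihilator_le_of_injective f hf).trans Ideal.annihilator_quotient.le)
  have hsupp : Module.support R (ModuleCat.of R (R ⧸ p)) ⊆ PrimeSpectrum.zeroLocus p := by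
    rw [Module.support_eq_zeroLocus]
    exact PrimeSpectrum.zeroLocus_anti_mono_ideal Ideal.annihilator_quotient.ge
  have : Subsingleton (R ⧸ p →ₗ[R] M ⧸ (Ideal.ofList rs • ⊤ : Submodule R M)) :=
    subsingleton_linearMap_of_subsingleton_ext (ModuleCat.of R (R ⧸ p)) rs (ModuleCat.of R M) hrs
      fun j hj => subsingleton_ext_of_lt_depthE hsupp (smul_top_ne_top_of_isPrime hprime hann)
        (lt_of_le_of_lt (by exact_mod_cast hj) hlt)
  obtain rfl : f = 0 := Subsingleton.elim _ _
  exact one_ne_zero (hf (LinearMap.zero_apply (1 : R ⧸ p)))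

end Depth

section CohenMacaulay

open RingTheory.Sequence Module

variable {R} {rs : List R}

lemma height_le_length_of_mem_associatedPrimes (hrs : IsWeaklyRegular R rs) {q : Ideal R}
    [q.IsPrime] (hq : q ∈ associatedPrimes R (R ⧸ Ideal.ofList rs))
    (hCM : IsCMLocalRing (Localization.AtPrime q)) : q.height ≤ rs.length := by
  obtain ⟨_, hdepth⟩ := hCM
  have hass :=
    associatedPrimes.mem_associatedPrimes_of_comap_mem_associatedPrimes_of_isLocalizedModule
      (R' := Localization.AtPrime q) q.primeCompl
      (Submodule.toLocalizedQuotient' (Localization.AtPrime q) q.primeCompl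
        (Algebra.linearMap R (Localization.AtPrime q)) (Ideal.ofList rs))
      (IsLocalRing.maximalIdeal (Localization.AtPrime q))
      (by rwa [← Ideal.under_def, Localization.AtPrime.under_maximalIdeal])
  rw [Ideal.localized'_eq_map, Ideal.map_ofList, ← Ideal.mul_top (Ideal.ofList _),
    ← smul_eq_mul] at hass
  have hle := depthE_le_length_of_mem_associatedPrimes
    (hrs.of_isLocalization (Localization.AtPrime q) q.primeCompl) hass
  rw [List.length_map] at hle
  rw [IsLocalization.AtPrime.ringKrullDim_eq_height q (Localization.AtPrime q)] at hdepth
  rwa [← WithBot.coe_inj.mp hdepth]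

variable [IsNoetherianRing R]

lemma length_le_height_of_isWeaklyRegular (hrs : IsWeaklyRegular R rs) {q : Ideal R} [q.IsPrime]
    (hq : Ideal.ofList rs ≤ q) : rs.length ≤ q.height := by
  have : IsNoetherianRing (Localization.AtPrime q) :=
    IsLocalization.isNoetherianRing q.primeCompl _ inferInstance
  have hregular := hrs.isRegular_of_isLocalization_of_mem (Localization.AtPrime q) q
    fun r hr => hq (Ideal.subset_span hr)
  have hdim := ringKrullDim_add_length_eq_ringKrullDim_of_isRegular _ hregular
  rw [IsLocalization.AtPrime.ringKrullDim_eq_height q (Localization.AtPrime q),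
    List.length_map] at hdim
  have : Nontrivial (Localization.AtPrime q ⧸
      Ideal.ofList (rs.map (algebraMap R (Localization.AtPrime q)))) :=
    Ideal.Quotient.nontrivial_iff.mpr fun htop => hregular.top_ne_smul (by simp [htop])
  exact WithBot.coe_le_coe.mp (hdim ▸ le_add_of_nonneg_left ringKrullDim_nonneg_of_nontrivial)

lemma mem_associatedPrimes_of_height_le (hrs : IsWeaklyRegular R rs) {q : Ideal R} [q.IsPrime]
    (hq : Ideal.ofList rs ≤ q) (hheight : q.height ≤ rs.length) :
    q ∈ associatedPrimes R (R ⧸ Ideal.ofList rs) := by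
  apply associatedPrimes.minimalPrimes_annihilator_subset_associatedPrimes
  rw [Ideal.annihilator_quotient]
  have := Ideal.finiteHeight_of_isNoetherianRing q
  refine Ideal.mem_minimalPrimes_of_height_le hq (hheight.trans ?_)
  rw [Ideal.height_eq_inf_minimalPrimes]
  refine le_iInf₂ fun J hJ => ?_
  have := hJ.1.1
  exact length_le_height_of_isWeaklyRegular hrs hJ.1.2

lemma exists_isSMulRegular_quotient_of_forall_not_le {p I : Ideal R}
    (hp : ∀ q ∈ associatedPrimes R (R ⧸ I), ¬ p ≤ q) : ∃ r ∈ p, IsSMulRegular (R ⧸ I) r := by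
  have havoid : ¬ (p : Set R) ⊆ ⋃ q ∈ associatedPrimes R (R ⧸ I), (q : Set R) := by
    rw [Ideal.subset_union_prime_finite (associatedPrimes.finite R (R ⧸ I)) (f := fun q => q) ⊤ ⊤
      fun q hq _ _ => hq.isPrime]
    exact fun ⟨q, hq, hpq⟩ => hp q hq hpq
  rw [biUnion_associatedPrimes_eq_compl_regular, Set.not_subset] at havoid
  obtain ⟨r, hrp, hr⟩ := havoid
  exact ⟨r, hrp, not_not.mp hr⟩

lemma exists_isWeaklyRegular_of_le_height
    (hCM : ∀ p : PrimeSpectrum R, IsCMLocalRing (Localization.AtPrime p.asIdeal))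
    {p : Ideal R} {h : ℕ} (hh : h ≤ p.height) :
    ∃ rs : List R, rs.length = h ∧ IsWeaklyRegular R rs ∧ Ideal.ofList rs ≤ p := by
  induction h with
  | zero => exact ⟨[], rfl, .nil R R, by simp⟩
  | succ h ih =>
    obtain ⟨rs, rfl, hrs, hle⟩ := ih (le_trans (by exact_mod_cast Nat.le_succ h) hh)
    obtain ⟨r, hrp, hr⟩ := exists_isSMulRegular_quotient_of_forall_not_le (p := p)
      (I := Ideal.ofList rs) fun q hq hpq => by
        have := hq.isPrime
        have hlt := hh.trans ((Ideal.height_mono hpq).trans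
          (height_le_length_of_mem_associatedPrimes hrs hq (hCM ⟨q, hq.isPrime⟩)))
        exact absurd (by exact_mod_cast hlt) (Nat.lt_irrefl rs.length)
    rw [← Ideal.mul_top (Ideal.ofList rs), ← smul_eq_mul] at hr
    refine ⟨rs ++ [r], by simp, (isWeaklyRegular_append_iff R rs [r]).mpr
      ⟨hrs, (isWeaklyRegular_singleton_iff _ r).mpr hr⟩, ?_⟩
    rw [Ideal.ofList_append, Ideal.ofList_singleton]
    exact sup_le hle ((Ideal.span_singleton_le_iff_mem p).mpr hrp)

end CohenMacaulay

section Descent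

open RingTheory.Sequence

variable {R} [IsNoetherianRing R] {𝒳 𝒴 : Set (ModuleCat.{u} R)}

lemma IsResolving.quotient_smul_top_mem_iterate_syzPreimage (h𝒳 : IsResolving R 𝒳) {rs : List R}
    {M : Type u} [AddCommGroup M] [Module R M] (hrs : IsWeaklyRegular M rs)
    (hM : ModuleCat.of R M ∈ 𝒳) :
    ModuleCat.of R (M ⧸ (Ideal.ofList rs • ⊤ : Submodule R M)) ∈ syzPreimage^[rs.length] 𝒳 := by
  induction rs generalizing 𝒳 M with
  | nil => exact h𝒳.mem_of_equiv (Submodule.quotEquivOfEqBot _ (by simp)).symm hM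
  | cons r rs ih =>
    rw [isWeaklyRegular_cons_iff] at hrs
    have hquot : ModuleCat.of R (QuotSMulTop r M) ∈ syzPreimage 𝒳 :=
      h𝒳.cokernel_mem_syzPreimage (isSES_lsmul_mkQ hrs.1) hM (h𝒳.subset_syzPreimage hM)
    exact (h𝒳.iterate_syzPreimage (rs.length + 1)).mem_of_equiv
      (Submodule.quotOfListConsSMulTopEquivQuotSMulTopInner M r rs).symm
      (ih h𝒳.syzPreimage hrs.2 hquot)

lemma IsResolving.quotient_mem_of_mem_associatedPrimes (h𝒴 : IsResolving R 𝒴) {I : Ideal R}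
    (hI : ModuleCat.of R (R ⧸ I) ∈ 𝒴)
    (h : ∀ q : PrimeSpectrum R, I ≤ q.asIdeal → ModuleCat.of R (R ⧸ q.asIdeal) ∈ syzPreimage 𝒴)
    {p : Ideal R} (hp : p ∈ associatedPrimes R (R ⧸ I)) : ModuleCat.of R (R ⧸ p) ∈ 𝒴 := by
  obtain ⟨_, f, hf⟩ := (isAssociatedPrime_iff_exists_injective_linearMap _ _).mp hp
  have hann : I ≤ Module.annihilator R ((R ⧸ I) ⧸ LinearMap.range f) :=
    Ideal.annihilator_quotient.ge.trans
      (LinearMap.annihilator_le_of_surjective _ (Submodule.mkQ_surjective _))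
  exact h𝒴.ker_mem ⟨hf, Submodule.mkQ_surjective _, (Submodule.ker_mkQ _).symm⟩ hI
    (h𝒴.syzPreimage.mem_of_forall_quotient_prime_mem fun q hq => h q (hann.trans hq))

lemma IsResolving.quotient_prime_mem_of_forall_mem_iterate (h𝒴 : IsResolving R 𝒴) {I : Ideal R}
    (hI : ModuleCat.of R (R ⧸ I) ∈ 𝒴)
    (h : ∀ q : PrimeSpectrum R, I ≤ q.asIdeal →
      q.asIdeal ∈ associatedPrimes R (R ⧸ I) ∨ ModuleCat.of R (R ⧸ q.asIdeal) ∈ 𝒴) {k : ℕ}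
    (hk : ∀ q : PrimeSpectrum R, I ≤ q.asIdeal →
      ModuleCat.of R (R ⧸ q.asIdeal) ∈ syzPreimage^[k] 𝒴)
    {p : PrimeSpectrum R} (hp : I ≤ p.asIdeal) : ModuleCat.of R (R ⧸ p.asIdeal) ∈ 𝒴 := by
  induction k with
  | zero => exact hk p hp
  | succ k ih =>
    have hmono : 𝒴 ⊆ syzPreimage^[k] 𝒴 := h𝒴.monotone_iterate_syzPreimage k.zero_le
    rw [Function.iterate_succ_apply'] at hk
    exact ih fun q hq => (h q hq).elim
      ((h𝒴.iterate_syzPreimage k).quotient_mem_of_mem_associatedPrimes (hmono hI) hk)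
      fun hmem => hmono hmem

lemma IsResolving.exists_forall_mem_iterate_syzPreimage (h𝒴 : IsResolving R 𝒴) {ι : Type*}
    {S : Set ι} (hS : S.Finite) {M : ι → ModuleCat.{u} R}
    (hM : ∀ i ∈ S, M i ∈ syzSaturation 𝒴) : ∃ k, ∀ i ∈ S, M i ∈ syzPreimage^[k] 𝒴 := by
  choose! n hn using fun i hi => Set.mem_iUnion.mp (hM i hi)
  obtain ⟨k, hk⟩ := (hS.image n).bddAbove
  exact ⟨k, fun i hi =>
    h𝒴.monotone_iterate_syzPreimage (hk (Set.mem_image_of_mem n hi)) (hn i hi)⟩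

theorem IsResolving.quotient_prime_mem_of_mem_syzSaturation (h𝒴 : IsResolving R 𝒴) {I : Ideal R}
    (hI : ModuleCat.of R (R ⧸ I) ∈ 𝒴)
    (h : ∀ q : PrimeSpectrum R, I ≤ q.asIdeal →
      q.asIdeal ∈ associatedPrimes R (R ⧸ I) ∨ ModuleCat.of R (R ⧸ q.asIdeal) ∈ 𝒴)
    (hass : ∀ q ∈ associatedPrimes R (R ⧸ I), ModuleCat.of R (R ⧸ q) ∈ syzSaturation 𝒴)
    {p : PrimeSpectrum R} (hp : I ≤ p.asIdeal) : ModuleCat.of R (R ⧸ p.asIdeal) ∈ 𝒴 := by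
  obtain ⟨k, hk⟩ := h𝒴.exists_forall_mem_iterate_syzPreimage
    (associatedPrimes.finite R (R ⧸ I)) hass
  exact h𝒴.quotient_prime_mem_of_forall_mem_iterate hI h (fun q hq => (h q hq).elim (hk _)
    fun hmem => h𝒴.monotone_iterate_syzPreimage k.zero_le hmem) hp

lemma IsResolving.syzSaturation_subset (h𝒳 : IsResolving R 𝒳) (d : ℕ) :
    syzSaturation 𝒳 ⊆ syzSaturation (syzPreimage^[d] 𝒳) := by
  refine Set.iUnion_mono fun n => ?_
  rw [← Function.iterate_add_apply]
  exact h𝒳.monotone_iterate_syzPreimage (Nat.le_add_right n d)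

theorem IsResolving.quotient_prime_mem_iterate_syzPreimage (h𝒳 : IsResolving R 𝒳)
    (hCM : ∀ p : PrimeSpectrum R, IsCMLocalRing (Localization.AtPrime p.asIdeal)) {d : ℕ}
    (hd : ringKrullDim R ≤ d)
    (h : ∀ p : PrimeSpectrum R, ModuleCat.of R (R ⧸ p.asIdeal) ∈ syzSaturation 𝒳)
    (p : PrimeSpectrum R) : ModuleCat.of R (R ⧸ p.asIdeal) ∈ syzPreimage^[d] 𝒳 := by
  have hle (q : PrimeSpectrum R) : q.asIdeal.height ≤ d := WithBot.coe_le_coe.mp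
    ((Ideal.height_le_ringKrullDim_of_ne_top q.isPrime.ne_top).trans hd)
  have hheight (q : PrimeSpectrum R) : q.asIdeal.height.toNat = q.asIdeal.height :=
    ENat.natCast_toNat (ne_top_of_le_ne_top (ENat.natCast_ne_top d) (hle q))
  have hwf := (measure fun p : PrimeSpectrum R => d - p.asIdeal.height.toNat).wf
  induction p using hwf.induction with
  | _ p ih =>
    obtain ⟨rs, hlength, hrs, hrsp⟩ := exists_isWeaklyRegular_of_le_height hCM (hheight p).le
    have hlength_le : rs.length ≤ d := by
      have := hle p
      rw [← hheight p] at this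
      exact hlength.trans_le (by exact_mod_cast this)
    have hquot : ModuleCat.of R (R ⧸ Ideal.ofList rs) ∈ syzPreimage^[d] 𝒳 := by
      have := h𝒳.quotient_smul_top_mem_iterate_syzPreimage hrs (h𝒳.mem_of_projective R)
      rw [smul_eq_mul, Ideal.mul_top] at this
      exact h𝒳.monotone_iterate_syzPreimage hlength_le this
    refine (h𝒳.iterate_syzPreimage d).quotient_prime_mem_of_mem_syzSaturation hquot
      (fun q hq => ?_) (fun q hq => h𝒳.syzSaturation_subset d (h ⟨q, hq.isPrime⟩)) hrsp
    by_cases hqp : q.asIdeal.height.toNat ≤ rs.length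
    · exact .inl (mem_associatedPrimes_of_height_le hrs hq
        (by rw [← hheight q]; exact_mod_cast hqp))
    · have hqd : q.asIdeal.height.toNat ≤ d := ENat.toNat_le_of_le_natCast (hle q)
      exact .inr (ih q (by change d - _ < d - _; omega))

end Descent

section Dominance

variable {R} [IsNoetherianRing R] {𝒳 : Set (ModuleCat.{u} R)}

theorem dominant_of_forall_exists_isSyz (h𝒳 : IsResolving R 𝒳)
    (h : ∀ p : PrimeSpectrum R, ∃ (n : ℕ) (K : ModuleCat.{u} R),
      IsSyz R n (ModuleCat.of R (R ⧸ p.asIdeal)) K ∧ K ∈ 𝒳) : Dominant R 𝒳 :=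
  (dominant_iff_exists_isSyz_memAddLocal h𝒳).mpr fun p => by
    obtain ⟨n, K, hK, hmem⟩ := h p
    exact ⟨n, K, hK, h𝒳.fg K hmem, (memAddLocal_iff h𝒳).mpr
      ⟨K, hmem, ModuleCat.of _ PUnit, ⟨LinearEquiv.prodUnique⟩⟩⟩

theorem dominant_iff_syzygies_general (h𝒳 : IsResolving R 𝒳) :
    (Dominant R 𝒳 ↔ ∀ p : PrimeSpectrum R, ∃ (n : ℕ) (K : ModuleCat.{u} R),
      IsSyz R n (ModuleCat.of R (R ⧸ p.asIdeal)) K ∧ K ∈ 𝒳) ∧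
    ∀ d : ℕ, (∀ p : PrimeSpectrum R, IsCMLocalRing (Localization.AtPrime p.asIdeal)) →
      ringKrullDim R ≤ d →
      (Dominant R 𝒳 ↔ ∀ p : PrimeSpectrum R, ∃ K : ModuleCat.{u} R,
        IsSyz R d (ModuleCat.of R (R ⧸ p.asIdeal)) K ∧ K ∈ 𝒳) := by
  refine ⟨⟨fun hdom p => ?_, dominant_of_forall_exists_isSyz h𝒳⟩, fun d hCM hd =>
    ⟨fun hdom p => ?_, fun h => dominant_of_forall_exists_isSyz h𝒳 fun p => ⟨d, h p⟩⟩⟩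
  · obtain ⟨n, hn⟩ := Set.mem_iUnion.mp (hdom.quotient_prime_mem_syzSaturation h𝒳 p)
    exact ⟨n, (mem_iterate_syzPreimage_iff h𝒳).mp hn⟩
  · exact (mem_iterate_syzPreimage_iff h𝒳).mp (h𝒳.quotient_prime_mem_iterate_syzPreimage hCM hd
      (hdom.quotient_prime_mem_syzSaturation h𝒳) p)

end Dominance

/-- Corollary: over a Cohen-Macaulay ring of finite Krull dimension `d`, a resolving
subcategory is dominant iff it contains some syzygy `Ω^n (R/p)` for each prime `p`,
iff it contains some `d`-th syzygy `Ω^d (R/p)` for each prime `p`. -/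
theorem dominant_iff_syzygies [IsNoetherianRing R]
    (hCM : ∀ p : PrimeSpectrum R, IsCMLocalRing (Localization.AtPrime p.asIdeal))
    (d : ℕ) (hd : ringKrullDim R = (d : WithBot ℕ∞))
    (𝒳 : Set (ModuleCat.{u} R)) (h𝒳 : IsResolving R 𝒳) :
    (Dominant R 𝒳 ↔ ∀ p : PrimeSpectrum R, ∃ (n : ℕ) (K : ModuleCat.{u} R),
      IsSyz R n (ModuleCat.of R (R ⧸ p.asIdeal)) K ∧ K ∈ 𝒳) ∧
    (Dominant R 𝒳 ↔ ∀ p : PrimeSpectrum R, ∃ K : ModuleCat.{u} R,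
      IsSyz R d (ModuleCat.of R (R ⧸ p.asIdeal)) K ∧ K ∈ 𝒳) := by
  obtain ⟨hsyz, hsyz_d⟩ := dominant_iff_syzygies_general h𝒳
  exact ⟨hsyz, hsyz_d d hCM hd.le⟩

end ResolvPaper
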